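/- For \(H \in (1/2,1)\) with \(H' = (H+1)/2\), as \(N \to \infty\), the quantity \(N^{2H} \sum_{i,j=1}^N \int_{I_i}\int_{I_i}\int_{I_j}\int_{I_j} |u-v|^{2H'-2}|u'-v'|^{2H'-2}|u-u'|^{2H'-2}|v-v'|^{2H'-2}\, du'\, dv'\, dv\, du\) converges to \(\frac{2}{a(H)^2}\big(\frac{1}{2H-1} - \frac{1}{2H}\big)\), where \(a(H) = H(H+1)/2\). -/

import Mathlib

/-!
Write `β = H - 1`. Rescaling every block to `(0, 1]` turns the `(i, j)` summand into
`N ^ (-4 (β + 1)) * K (i - j)`, where `K` is `blockKernel β` (`block_eq`), so the quantity is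
`N ^ (-2H) * ∑ i j, K (i - j)`.

When `|t| = n + 1` with `n > 0`, the cross factors `|u - u' + t| ^ β` and `|v - v' + t| ^ β` lie
between `(n + 2) ^ β` and `n ^ β` on the unit cube, while the two within-block factors integrate to
`c = ∫∫ |u - v| ^ β = 2 / (H (H + 1))` each. Hence `K t / n ^ (2β) → c²` (`tendsto_blockKernel`).
The values at lags `0` and `±1` enter only as real numbers: finitely many lags do not matter, so
no estimate of the singular cross terms is needed.

The double sum equals `∑ n < N, (K 0 + ∑ k < n, (K (k + 1) + K (-(k + 1))))` (`double_sum_eq`).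
Two applications of `tendsto_sum_div_rpow` (if `a n ~ L n ^ (q - 1)` then its partial sums are
`~ (L / q) n ^ q`), with `q = 2H - 1 > 0` and then `q = 2H`, give the limit
`2 c² / (2H (2H - 1))`. The positivity of `2H - 1` is also what makes the diagonal term `K 0`
negligible.
-/

open Real Filter MeasureTheory

lemma tendsto_ratio (c s : ℝ) :
    Tendsto (fun n : ℕ => ((n : ℝ) + c) ^ s / (n : ℝ) ^ s) atTop (nhds 1) := by
  have h : Tendsto (fun n : ℕ => 1 + c / (n : ℝ)) atTop (nhds 1) := by
    simpa using (tendsto_const_div_atTop_nhds_zero_nat c).const_add 1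
  have h' := h.rpow_const (p := s) (Or.inl one_ne_zero)
  rw [one_rpow] at h'
  refine h'.congr' ?_
  filter_upwards [eventually_gt_atTop 0, eventually_ge_atTop ⌈-c⌉₊] with n hn hc
  have hn' : (0 : ℝ) < n := by exact_mod_cast hn
  have hc' : 0 ≤ (n : ℝ) + c := by have := Nat.ceil_le.mp hc; linarith
  rw [← div_rpow hc' hn'.le]
  congr 1
  field_simp

lemma tendsto_increment (q : ℝ) :
    Tendsto (fun n : ℕ => (((n + 1 : ℕ) : ℝ) ^ q - (n : ℝ) ^ q) / (n : ℝ) ^ (q - 1))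
      atTop (nhds q) := by
  have hd : HasDerivAt (fun x : ℝ => x ^ q) q 1 := by
    simpa using Real.hasDerivAt_rpow_const (x := 1) (p := q) (Or.inl one_ne_zero)
  have h0 : Tendsto (fun n : ℕ => ((n : ℝ))⁻¹) atTop (nhdsWithin 0 {0}ᶜ) := by
    rw [tendsto_nhdsWithin_iff]
    refine ⟨tendsto_inv_atTop_nhds_zero_nat, ?_⟩
    filter_upwards [eventually_gt_atTop 0] with n hn
    have : (n : ℝ) ≠ 0 := by positivity
    simpa using hn.ne'
  have := (hasDerivAt_iff_tendsto_slope_zero.mp hd).comp h0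
  refine this.congr' ?_
  filter_upwards [eventually_gt_atTop 0] with n hn
  have hn' : (0 : ℝ) < n := by exact_mod_cast hn
  have e : (1 : ℝ) + (n : ℝ)⁻¹ = ((n + 1 : ℕ) : ℝ) / n := by push_cast; field_simp
  simp only [Function.comp, e, smul_eq_mul, inv_inv, one_rpow]
  rw [div_rpow (by positivity) hn'.le, rpow_sub_one hn'.ne']
  have : (n : ℝ) ^ q ≠ 0 := by positivity
  field_simp

/-- A Stolz–Cesàro statement: after subtracting `L / q` times the increments of `n ^ q`, which
telescope, the remaining terms are little-o of these increments, hence so are their sums. -/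
lemma tendsto_sum_div_rpow {a : ℕ → ℝ} {q L : ℝ} (hq : 0 < q)
    (ha : Tendsto (fun n : ℕ => a n / (n : ℝ) ^ (q - 1)) atTop (nhds L)) :
    Tendsto (fun n : ℕ => (∑ k ∈ Finset.range n, a k) / (n : ℝ) ^ q) atTop (nhds (L / q)) := by
  set g : ℕ → ℝ := fun n => ((n + 1 : ℕ) : ℝ) ^ q - (n : ℝ) ^ q with hg
  have hsum : ∀ n, ∑ k ∈ Finset.range n, g k = (n : ℝ) ^ q := fun n => by
    rw [Finset.sum_range_sub (fun k : ℕ => (k : ℝ) ^ q)]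
    simp [hq.ne']
  have hg0 : 0 ≤ g := fun n => sub_nonneg.mpr (rpow_le_rpow (by positivity) (by simp) hq.le)
  have hgpos : ∀ n, 0 < g n :=
    fun n => sub_pos.mpr (rpow_lt_rpow (by positivity) (by simp) hq)
  have hag : Tendsto (fun n => a n / g n) atTop (nhds (L / q)) := by
    refine (ha.div (tendsto_increment q) hq.ne').congr' ?_
    filter_upwards [eventually_gt_atTop 0] with n hn
    have : (n : ℝ) ^ (q - 1) ≠ 0 := by positivity
    exact div_div_div_cancel_right₀ this _ _
  have hlo : (fun n => a n - L / q * g n) =o[atTop] g := by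
    rw [Asymptotics.isLittleO_iff_tendsto (fun n h => absurd h (hgpos n).ne')]
    have := hag.sub_const (L / q)
    rw [sub_self] at this
    refine this.congr fun n => ?_
    have := (hgpos n).ne'
    field_simp
  have htop : Tendsto (fun n : ℕ => (n : ℝ) ^ q) atTop atTop :=
    (tendsto_rpow_atTop hq).comp tendsto_natCast_atTop_atTop
  have hS := hlo.sum_range hg0 (by simpa only [hsum] using htop)
  simp only [Finset.sum_sub_distrib, ← Finset.mul_sum, hsum] at hS
  have hS' := hS.tendsto_div_nhds_zero.add_const (L / q)
  rw [zero_add] at hS'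
  refine hS'.congr' ?_
  filter_upwards [eventually_gt_atTop 0] with n hn
  have : (n : ℝ) ^ q ≠ 0 := by positivity
  field_simp
  ring

/-- The fourfold integral for two unit blocks at signed distance `t`: the variables `u, v` live in
one block and `u', v'` in the other, both translated to `(0, 1]`. -/
noncomputable def blockKernel (β t : ℝ) : ℝ :=
  ∫ u in Set.Ioc (0 : ℝ) 1, ∫ v in Set.Ioc (0 : ℝ) 1,
    ∫ u' in Set.Ioc (0 : ℝ) 1, ∫ v' in Set.Ioc (0 : ℝ) 1,
      |u - v| ^ β * |u' - v'| ^ β * |u - u' + t| ^ β * |v - v' + t| ^ β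

lemma setIntegral_block {n : ℝ} (hn : 0 < n) (i : ℝ) (g : ℝ → ℝ) :
    ∫ u in Set.Ioc ((i - 1) / n) (i / n), g u
      = n⁻¹ * ∫ x in Set.Ioc (0 : ℝ) 1, g (x / n + (i - 1) / n) := by
  rw [← intervalIntegral.integral_of_le (by gcongr; linarith),
    ← intervalIntegral.integral_of_le zero_le_one,
    intervalIntegral.integral_comp_div_add _ hn.ne']
  rw [smul_eq_mul, inv_mul_cancel_left₀ hn.ne']
  congr 1 <;> ring

/-- Scaling to unit blocks. Being an affine change of variables, it holds for the Bochner integral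
without any integrability assumption. -/
lemma block_eq {n : ℝ} (hn : 0 < n) (i j β : ℝ) :
    (∫ u in Set.Ioc ((i - 1) / n) (i / n), ∫ v in Set.Ioc ((i - 1) / n) (i / n),
      ∫ u' in Set.Ioc ((j - 1) / n) (j / n), ∫ v' in Set.Ioc ((j - 1) / n) (j / n),
        |u - v| ^ β * |u' - v'| ^ β * |u - u'| ^ β * |v - v'| ^ β)
      = n ^ (-4 * (β + 1)) * blockKernel β (i - j) := by
  have key : ∀ x y a b : ℝ, |x / n + (a - 1) / n - (y / n + (b - 1) / n)| ^ β
      = n ^ (-β) * |x - y + (a - b)| ^ β := by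
    intro x y a b
    rw [show x / n + (a - 1) / n - (y / n + (b - 1) / n) = (x - y + (a - b)) / n by ring,
      abs_div, abs_of_pos hn, div_rpow (abs_nonneg _) hn.le, rpow_neg hn.le]
    field_simp
  have hpow : n ^ (-4 * (β + 1)) = n⁻¹ * (n⁻¹ * (n⁻¹ * (n⁻¹ * (n ^ (-β)) ^ 4))) := by
    rw [show -4 * (β + 1) = (-β) * (4 : ℕ) + -(4 : ℕ) by push_cast; ring, rpow_add hn,
      rpow_mul_natCast hn.le, rpow_neg hn.le (↑(4 : ℕ)), rpow_natCast]
    field_simp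
  simp_rw [setIntegral_block hn]
  rw [hpow, blockKernel]
  simp_rw [← integral_const_mul]
  refine integral_congr_ae (.of_forall fun u => integral_congr_ae (.of_forall fun v =>
    integral_congr_ae (.of_forall fun u' => integral_congr_ae (.of_forall fun v' => ?_))))
  dsimp only
  rw [key u v i i, key u' v' j j, key u u' i j, key v v' i j, sub_self, sub_self, add_zero,
    add_zero]
  ring

/-- Lebesgue measure restricted to `(0, 1]`. -/
noncomputable abbrev unitMeas : Measure ℝ := volume.restrict (Set.Ioc (0 : ℝ) 1)

lemma intervalIntegrable_abs_rpow {β : ℝ} (h : -1 < β) (a b : ℝ) :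
    IntervalIntegrable (fun x : ℝ => |x| ^ β) volume a b := by
  have h0 : ∀ b : ℝ, 0 ≤ b → IntervalIntegrable (fun x : ℝ => |x| ^ β) volume 0 b := by
    intro b hb
    refine (intervalIntegral.intervalIntegrable_rpow' h (a := 0) (b := b)).congr ?_
    intro x hx
    rw [Set.uIoc_of_le hb] at hx
    simp [abs_of_pos hx.1]
  have h1 : ∀ b : ℝ, IntervalIntegrable (fun x : ℝ => |x| ^ β) volume 0 b := by
    intro b
    rcases le_total 0 b with hb | hb
    · exact h0 b hb
    · have := (h0 (-b) (by linarith)).comp_mul_left (c := -1)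
      simpa using this
  exact (h1 a).symm.trans (h1 b)

lemma integral_abs_rpow {β : ℝ} (h : -1 < β) {b : ℝ} (hb : 0 ≤ b) :
    ∫ x in (0 : ℝ)..b, |x| ^ β = b ^ (β + 1) / (β + 1) := by
  have : ∫ x in (0 : ℝ)..b, |x| ^ β = ∫ x in (0 : ℝ)..b, x ^ β := by
    refine intervalIntegral.integral_congr fun x hx => ?_
    rw [Set.uIcc_of_le hb] at hx
    simp [abs_of_nonneg hx.1]
  rw [this, integral_rpow (Or.inl h), zero_rpow (by linarith), sub_zero]

lemma integral_abs_const_sub_rpow {β : ℝ} (h : -1 < β) {u : ℝ} (hu : u ∈ Set.Ioc (0 : ℝ) 1) :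
    ∫ v, |u - v| ^ β ∂unitMeas = (u ^ (β + 1) + (1 - u) ^ (β + 1)) / (β + 1) := by
  rw [← intervalIntegral.integral_of_le zero_le_one,
    intervalIntegral.integral_comp_sub_left (fun x : ℝ => |x| ^ β) u, sub_zero,
    ← intervalIntegral.integral_add_adjacent_intervals
      (intervalIntegrable_abs_rpow h (u - 1) 0) (intervalIntegrable_abs_rpow h 0 u),
    integral_abs_rpow h hu.1.le]
  have := intervalIntegral.integral_comp_neg (fun x : ℝ => |x| ^ β) (a := 0) (b := 1 - u)
  simp only [abs_neg, neg_zero, neg_sub] at this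
  rw [← this, integral_abs_rpow h (by linarith [hu.2])]
  ring

lemma continuous_integral_abs_const_sub_rpow {β : ℝ} (h : -1 < β) :
    Continuous fun u : ℝ => (u ^ (β + 1) + (1 - u) ^ (β + 1)) / (β + 1) := by
  have := Real.continuous_rpow_const (q := β + 1) (by linarith)
  exact (this.add (this.comp (continuous_const.sub continuous_id))).div_const _

lemma measurable_abs_sub_rpow (β : ℝ) : Measurable fun z : ℝ × ℝ => |z.1 - z.2| ^ β := by
  fun_prop

lemma integrable_abs_sub_rpow {β : ℝ} (h : -1 < β) :
    Integrable (fun z : ℝ × ℝ => |z.1 - z.2| ^ β) (unitMeas.prod unitMeas) := by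
  rw [integrable_prod_iff (measurable_abs_sub_rpow β).aestronglyMeasurable]
  constructor
  · refine Eventually.of_forall fun u => ?_
    have := (intervalIntegrable_abs_rpow h (u - 0) (u - 1)).comp_sub_left u
    rw [sub_sub_cancel, sub_sub_cancel] at this
    exact (intervalIntegrable_iff_integrableOn_Ioc_of_le zero_le_one).mp this
  · have hc : Integrable (fun u : ℝ => (u ^ (β + 1) + (1 - u) ^ (β + 1)) / (β + 1)) unitMeas :=
      (continuous_integral_abs_const_sub_rpow h).integrableOn_Ioc
    refine hc.congr ?_
    filter_upwards [ae_restrict_mem measurableSet_Ioc] with u hu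
    rw [← integral_abs_const_sub_rpow h hu]
    refine integral_congr_ae (Eventually.of_forall fun v => ?_)
    exact (Real.norm_of_nonneg (by positivity)).symm

lemma integral_abs_sub_rpow {β : ℝ} (h : -1 < β) :
    ∫ z, |z.1 - z.2| ^ β ∂(unitMeas.prod unitMeas) = 2 / ((β + 1) * (β + 2)) := by
  rw [integral_prod _ (integrable_abs_sub_rpow h),
    setIntegral_congr_fun measurableSet_Ioc (fun u hu => integral_abs_const_sub_rpow h hu),
    ← intervalIntegral.integral_of_le zero_le_one, intervalIntegral.integral_div]
  have hc := Real.continuous_rpow_const (q := β + 1) (by linarith)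
  have hI : ∫ x in (0 : ℝ)..1, x ^ (β + 1) = 1 / (β + 2) := by
    rw [integral_rpow (Or.inl (by linarith)), zero_rpow (by linarith)]
    norm_num [add_assoc]
  have hc' : Continuous fun x : ℝ => (1 - x) ^ (β + 1) :=
    hc.comp (continuous_const.sub continuous_id)
  rw [intervalIntegral.integral_add (hc.intervalIntegrable _ _) (hc'.intervalIntegrable _ _),
    intervalIntegral.integral_comp_sub_left (fun x : ℝ => x ^ (β + 1)) 1]
  simp only [sub_self, sub_zero, hI]
  have h1 : β + 1 ≠ 0 := by linarith
  have h2 : β + 2 ≠ 0 := by linarith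
  field_simp
  norm_num

/-- Two points of `(0, 1]` differ by at most `1`, so a shift by `t` with `|t| = n + 1` keeps the
distance within `[n, n + 2]`; the exponent is nonpositive, which reverses the bounds. -/
lemma factor_bounds {β t n x y : ℝ} (hβ : β ≤ 0) (hn : 0 < n) (ht : |t| = n + 1)
    (hx : x ∈ Set.Ioc (0 : ℝ) 1) (hy : y ∈ Set.Ioc (0 : ℝ) 1) :
    (n + 2) ^ β ≤ |x - y + t| ^ β ∧ |x - y + t| ^ β ≤ n ^ β := by
  have h1 : |x - y| ≤ 1 := abs_le.mpr ⟨by linarith [hx.1, hy.2], by linarith [hx.2, hy.1]⟩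
  have h2 : n ≤ |x - y + t| := by
    have := abs_sub_abs_le_abs_sub t (-(x - y))
    rw [abs_neg, sub_neg_eq_add, add_comm t] at this
    linarith
  have h3 : |x - y + t| ≤ n + 2 := by linarith [abs_add_le (x - y) t]
  exact ⟨rpow_le_rpow_of_nonpos (by linarith) h3 hβ, rpow_le_rpow_of_nonpos hn h2 hβ⟩

/-- The iterated integral is identified with an integral over the product measure, which is where
integrability of the kernel (from its upper bound) is used. -/
lemma blockKernel_bounds {β t n : ℝ} (hβ1 : -1 < β) (hβ : β ≤ 0) (hn : 0 < n)
    (ht : |t| = n + 1) :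
    (2 / ((β + 1) * (β + 2))) ^ 2 * (n + 2) ^ (2 * β) ≤ blockKernel β t ∧
      blockKernel β t ≤ (2 / ((β + 1) * (β + 2))) ^ 2 * n ^ (2 * β) := by
  set ν : Measure (ℝ × ℝ) := unitMeas.prod unitMeas with hν
  set F : (ℝ × ℝ) × (ℝ × ℝ) → ℝ := fun x =>
    |x.1.1 - x.1.2| ^ β * |x.2.1 - x.2.2| ^ β * |x.1.1 - x.2.1 + t| ^ β
      * |x.1.2 - x.2.2 + t| ^ β with hF
  set P : (ℝ × ℝ) × (ℝ × ℝ) → ℝ := fun x => |x.1.1 - x.1.2| ^ β * |x.2.1 - x.2.2| ^ β with hP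
  have hPint : Integrable P (ν.prod ν) := (integrable_abs_sub_rpow hβ1).mul_prod (integrable_abs_sub_rpow hβ1)
  have hPval : ∫ x, P x ∂(ν.prod ν) = (2 / ((β + 1) * (β + 2))) ^ 2 := by
    have := integral_prod_mul (μ := ν) (ν := ν) (fun z : ℝ × ℝ => |z.1 - z.2| ^ β)
      (fun z : ℝ × ℝ => |z.1 - z.2| ^ β)
    rw [hP, this, integral_abs_sub_rpow hβ1, sq]
  have hsq : ∀ m : ℝ, 0 ≤ m → m ^ (2 * β) = m ^ β * m ^ β := fun m hm => by
    rw [mul_comm, rpow_mul hm, rpow_two, sq]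
  have hmem : ∀ᵐ x ∂(ν.prod ν), x.1.1 ∈ Set.Ioc (0 : ℝ) 1 ∧ x.1.2 ∈ Set.Ioc (0 : ℝ) 1 ∧
      x.2.1 ∈ Set.Ioc (0 : ℝ) 1 ∧ x.2.2 ∈ Set.Ioc (0 : ℝ) 1 := by
    have : ν.prod ν = volume.restrict ((Set.Ioc (0 : ℝ) 1 ×ˢ Set.Ioc (0 : ℝ) 1) ×ˢ
        (Set.Ioc (0 : ℝ) 1 ×ˢ Set.Ioc (0 : ℝ) 1)) := by
      rw [hν, unitMeas, Measure.prod_restrict, Measure.prod_restrict]; rfl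
    rw [this]
    filter_upwards [ae_restrict_mem (by measurability)] with x hx
    exact ⟨hx.1.1, hx.1.2, hx.2.1, hx.2.2⟩
  have hbd : ∀ᵐ x ∂(ν.prod ν), P x * (n + 2) ^ (2 * β) ≤ F x ∧ F x ≤ P x * n ^ (2 * β) := by
    filter_upwards [hmem] with x ⟨h1, h2, h3, h4⟩
    obtain ⟨a1, a2⟩ := factor_bounds hβ hn ht h1 h3
    obtain ⟨b1, b2⟩ := factor_bounds hβ hn ht h2 h4
    rw [hsq _ hn.le, hsq _ (by linarith), hF, hP]
    simp only [mul_assoc]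
    constructor <;> gcongr
  have hFmeas : Measurable F := by rw [hF]; fun_prop
  have hFint : Integrable F (ν.prod ν) := by
    refine (hPint.mul_const (n ^ (2 * β))).mono' hFmeas.aestronglyMeasurable ?_
    filter_upwards [hbd] with x hx
    rw [Real.norm_eq_abs, abs_of_nonneg (by rw [hF]; positivity)]
    exact hx.2
  have hval : blockKernel β t = ∫ x, F x ∂(ν.prod ν) := by
    have hG : (fun z => ∫ w, F (z, w) ∂ν) =ᵐ[ν]
        fun z => ∫ u', ∫ v', F (z, (u', v')) ∂unitMeas ∂unitMeas := by
      filter_upwards [hFint.prod_right_ae] with z hz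
      exact integral_prod _ hz
    rw [integral_prod _ hFint, integral_congr_ae hG,
      integral_prod _ (hFint.integral_prod_left.congr hG)]
    rfl
  rw [hval, ← hPval, ← integral_mul_const, ← integral_mul_const]
  exact ⟨integral_mono_ae (hPint.mul_const _) hFint (hbd.mono fun x hx => hx.1),
    integral_mono_ae hFint (hPint.mul_const _) (hbd.mono fun x hx => hx.2)⟩

lemma tendsto_blockKernel {β : ℝ} (hβ1 : -1 < β) (hβ : β ≤ 0) (t : ℕ → ℝ)
    (ht : ∀ n, |t n| = n + 1) :
    Tendsto (fun n : ℕ => blockKernel β (t n) / (n : ℝ) ^ (2 * β)) atTop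
      (nhds ((2 / ((β + 1) * (β + 2))) ^ 2)) := by
  have hl := (tendsto_ratio 2 (2 * β)).const_mul ((2 / ((β + 1) * (β + 2))) ^ 2)
  rw [mul_one] at hl
  refine tendsto_of_tendsto_of_tendsto_of_le_of_le' hl tendsto_const_nhds ?_ ?_
  all_goals
    filter_upwards [eventually_gt_atTop 0] with n hn
    have hn' : (0 : ℝ) < n := by exact_mod_cast hn
    have hb := blockKernel_bounds hβ1 hβ hn' (ht n)
  · rw [← mul_div_assoc]
    gcongr
    exact hb.1
  · rw [div_le_iff₀ (by positivity)]
    exact hb.2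

/-- The `n`-th term on the right is the new row, column and corner when `{1, …, n}²` grows to
`{1, …, n + 1}²`. -/
lemma double_sum_eq (K : ℝ → ℝ) (N : ℕ) :
    ∑ i ∈ Finset.Icc 1 N, ∑ j ∈ Finset.Icc 1 N, K ((i : ℝ) - j)
      = ∑ n ∈ Finset.range N,
          (K 0 + ∑ k ∈ Finset.range n, (K ((k : ℝ) + 1) + K (-((k : ℝ) + 1)))) := by
  induction N with
  | zero => simp
  | succ N ih =>
    have e : ∀ f : ℝ → ℝ, ∑ i ∈ Finset.Icc 1 N, f (((N + 1 : ℕ) : ℝ) - i)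
        = ∑ k ∈ Finset.range N, f ((k : ℝ) + 1) := by
      intro f
      refine Finset.sum_nbij' (fun i => N - i) (fun k => N - k) ?_ ?_ ?_ ?_ ?_
      all_goals
        intro i hi
        simp only [Finset.mem_Icc, Finset.mem_range] at hi ⊢
      · omega
      · omega
      · omega
      · omega
      · rw [Nat.cast_sub hi.2]
        push_cast
        congr 1
        ring
    rw [Finset.sum_range_succ, ← ih, Finset.sum_add_distrib, ← e K, ← e (fun x => K (-x))]
    simp only [Finset.sum_Icc_succ_top (Nat.le_add_left 1 N), Finset.sum_add_distrib, sub_self,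
      neg_sub]
    ring

/-- For `H ∈ (1/2,1)` with `H' = (H+1)/2`, `I_i = ((i-1)/N, i/N]`,
`N^{2H} ∑_{i,j=1}^N ∫_{I_i}∫_{I_i}∫_{I_j}∫_{I_j}
  |u-v|^{2H'-2}|u'-v'|^{2H'-2}|u-u'|^{2H'-2}|v-v'|^{2H'-2} du' dv' dv du`
converges to `(2/a(H)²)(1/(2H-1) - 1/(2H))` where `a(H) = H(H+1)/2`. -/
theorem stmt_5 (H : ℝ) (h1 : 1/2 < H) (h2 : H < 1) :
    Tendsto (fun N : ℕ =>
      (N : ℝ) ^ (2 * H) * ∑ i ∈ Finset.Icc 1 N, ∑ j ∈ Finset.Icc 1 N,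
        ∫ u in Set.Ioc (((i : ℝ) - 1) / N) ((i : ℝ) / N),
          ∫ v in Set.Ioc (((i : ℝ) - 1) / N) ((i : ℝ) / N),
            ∫ u' in Set.Ioc (((j : ℝ) - 1) / N) ((j : ℝ) / N),
              ∫ v' in Set.Ioc (((j : ℝ) - 1) / N) ((j : ℝ) / N),
                |u - v| ^ (2 * ((H + 1) / 2) - 2)
                  * |u' - v'| ^ (2 * ((H + 1) / 2) - 2)
                  * |u - u'| ^ (2 * ((H + 1) / 2) - 2)
                  * |v - v'| ^ (2 * ((H + 1) / 2) - 2))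
      atTop (nhds (2 / (H * (H + 1) / 2) ^ 2 * (1 / (2 * H - 1) - 1 / (2 * H)))) := by
  have hβ : 2 * ((H + 1) / 2) - 2 = H - 1 := by ring
  rw [hβ]
  set K := blockKernel (H - 1) with hK
  set c : ℝ := (2 / ((H - 1 + 1) * (H - 1 + 2))) ^ 2 with hc
  have hpair : Tendsto (fun n : ℕ => (K ((n : ℝ) + 1) + K (-((n : ℝ) + 1)))
      / (n : ℝ) ^ ((2 * H - 1) - 1)) atTop (nhds (c + c)) := by
    have hp : ∀ n : ℕ, |(n : ℝ) + 1| = n + 1 := fun n => abs_of_pos (by positivity)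
    have := (tendsto_blockKernel (β := H - 1) (by linarith) (by linarith)
      (fun n => (n : ℝ) + 1) hp).add
      (tendsto_blockKernel (β := H - 1) (by linarith) (by linarith)
        (fun n => -((n : ℝ) + 1)) (fun n => by rw [abs_neg, hp]))
    refine this.congr fun n => ?_
    rw [← add_div, show 2 * H - 1 - 1 = 2 * (H - 1) by ring]
  have hrow : Tendsto (fun n : ℕ => (K 0 + ∑ k ∈ Finset.range n,
      (K ((k : ℝ) + 1) + K (-((k : ℝ) + 1)))) / (n : ℝ) ^ (2 * H - 1)) atTop
      (nhds ((c + c) / (2 * H - 1))) := by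
    have h0 : Tendsto (fun n : ℕ => K 0 / (n : ℝ) ^ (2 * H - 1)) atTop (nhds 0) :=
      ((tendsto_rpow_atTop (by linarith)).comp tendsto_natCast_atTop_atTop).const_div_atTop _
    simpa only [add_div, zero_add] using h0.add (tendsto_sum_div_rpow (by linarith) hpair)
  have hall := tendsto_sum_div_rpow (q := 2 * H) (by linarith) hrow
  have hlim : (c + c) / (2 * H - 1) / (2 * H)
      = 2 / (H * (H + 1) / 2) ^ 2 * (1 / (2 * H - 1) - 1 / (2 * H)) := by
    have e1 : 2 * H - 1 ≠ 0 := by linarith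
    have e2 : H ≠ 0 := by linarith
    have e3 : H + 1 ≠ 0 := by linarith
    rw [hc, show H - 1 + 1 = H by ring, show H - 1 + 2 = H + 1 by ring]
    field_simp
    ring
  rw [hlim] at hall
  refine hall.congr' ?_
  filter_upwards [eventually_gt_atTop 0] with N hN
  have hN' : (0 : ℝ) < N := by exact_mod_cast hN
  simp_rw [block_eq hN', ← Finset.mul_sum]
  rw [double_sum_eq, ← mul_assoc, ← rpow_add hN',
    show 2 * H + -4 * (H - 1 + 1) = -(2 * H) by ring, rpow_neg hN'.le, div_eq_inv_mul]
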